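/- Let k = 2d with d ≥ 1 and π ∈ S_k with ν(π) > 2. Let j = π(1) and let j' be the unique element of [k] congruent to j − o_j modulo k. If j is not free but j' is free, then there exists τ ∈ S_k with d_{P_k}(π, τ) ≤ 3 and ν(π) − ν(τ) ≥ 3. -/

import Mathlib

/-- `π` and `τ` are related by a prefix reversal: there is `t ≤ k` such that the first `t`
entries are reversed and the remaining entries agree (0-indexed form of the paper's
1-indexed definition). -/
def PrefixRev (k : ℕ) (π τ : Equiv.Perm (Fin k)) : Prop :=
  ∃ t : ℕ, ∃ ht : t ≤ k,
    (∀ i : Fin k, t ≤ (i : ℕ) → π i = τ i) ∧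
    (∀ i : Fin k, ∀ hi : (i : ℕ) < t, π i = τ ⟨t - 1 - (i : ℕ), by omega⟩)

/-- `π` and `τ` are related by a suffix reversal: there is `t` such that the entries at
positions `< t` agree and the remaining entries are reversed. -/
def SuffixRev (k : ℕ) (π τ : Equiv.Perm (Fin k)) : Prop :=
  ∃ t : ℕ,
    (∀ i : Fin k, (i : ℕ) < t → π i = τ i) ∧
    (∀ i : Fin k, ∀ hi : t ≤ (i : ℕ), π i = τ ⟨k - 1 - (i : ℕ) + t, by
      have := i.isLt; omega⟩)

/-- The pancake graph `P_k`, whose edges are prefix reversals. -/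
def pancakeGraph (k : ℕ) : SimpleGraph (Equiv.Perm (Fin k)) :=
  SimpleGraph.fromRel (PrefixRev k)

/-- The graph `G_k`, whose edges are prefix and suffix reversals. -/
def prefixSuffixGraph (k : ℕ) : SimpleGraph (Equiv.Perm (Fin k)) :=
  SimpleGraph.fromRel (fun π τ => PrefixRev k π τ ∨ SuffixRev k π τ)

/-- The values of `π` at positions `p` and `q` differ by `1`, or are `{1, k}`
(1-indexed), i.e. `{0, k - 1}` in this 0-indexed formalization. -/
def PiAdjacency (k : ℕ) (π : Equiv.Perm (Fin k)) (p q : Fin k) : Prop :=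
  (((π p : ℕ) : ℤ) - ((π q : ℕ) : ℤ)).natAbs = 1 ∨
    ({(π p : ℕ), (π q : ℕ)} : Set ℕ) = {0, k - 1}

/-- Positions `i` and `i + 1` (0-indexed) form a `π`-adjacency. -/
def PosAdjacency (k : ℕ) (π : Equiv.Perm (Fin k)) (i : ℕ) : Prop :=
  ∃ h : i + 1 < k, PiAdjacency k π ⟨i, by omega⟩ ⟨i + 1, h⟩

/-- The equivalence relation `∼_π`: `a ∼_π b` iff every pair of consecutive positions
between the position of `a` and the position of `b` is a `π`-adjacency. -/
def Sim (k : ℕ) (π : Equiv.Perm (Fin k)) (a b : Fin k) : Prop :=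
  ∀ i : ℕ, min ((π.symm a : ℕ)) ((π.symm b : ℕ)) ≤ i →
    i < max ((π.symm a : ℕ)) ((π.symm b : ℕ)) → PosAdjacency k π i

/-- `∼_π` has exactly one equivalence class on `[k]`. -/
def OneClass (k : ℕ) (π : Equiv.Perm (Fin k)) : Prop :=
  ∀ a b : Fin k, Sim k π a b

/-- The pairing `φ(j) = j + o_j`, swapping `2i - 1 ↔ 2i` (1-indexed),
i.e. `2i ↔ 2i + 1` (0-indexed). -/
def partner (d : ℕ) (j : Fin (2 * d)) : Fin (2 * d) :=
  ⟨if (j : ℕ) % 2 = 0 then (j : ℕ) + 1 else (j : ℕ) - 1, by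
    have := j.isLt; split <;> omega⟩

/-- The equivalence relation `≈_π`. -/
def ApproxSim (d : ℕ) (π : Equiv.Perm (Fin (2 * d))) (a b : Fin (2 * d)) : Prop :=
  a = b ∨ (Sim (2 * d) π a b ∧ Sim (2 * d) π a (partner d a) ∧
    Sim (2 * d) π b (partner d b))

/-- `j` is free, i.e. `{j}` is an equivalence class (a singleton) of `≈_π`. -/
def IsFree (d : ℕ) (π : Equiv.Perm (Fin (2 * d))) (j : Fin (2 * d)) : Prop :=
  ∀ j' : Fin (2 * d), ApproxSim d π j j' → j' = j

/-- The `≈_π`-equivalence class of `j`, as a finite set. -/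
noncomputable def classOf (d : ℕ) (π : Equiv.Perm (Fin (2 * d))) (j : Fin (2 * d)) :
    Finset (Fin (2 * d)) :=
  @Finset.filter _ (fun j' => ApproxSim d π j j') (Classical.decPred _) Finset.univ

/-- `S(π)`, the number of singletons of `π`. -/
noncomputable def numSingletons (d : ℕ) (π : Equiv.Perm (Fin (2 * d))) : ℕ :=
  (@Finset.filter _ (fun j => IsFree d π j) (Classical.decPred _) Finset.univ).card

/-- `B(π)`, the number of blocks (equivalence classes of `≈_π` of size `> 1`) of `π`. -/
noncomputable def numBlocks (d : ℕ) (π : Equiv.Perm (Fin (2 * d))) : ℕ :=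
  ((Finset.univ.image (classOf d π)).filter (fun C => 1 < C.card)).card

/-- The potential function `ν(π) = (3/2) S(π) + 2 B(π)`. -/
noncomputable def nu (d : ℕ) (π : Equiv.Perm (Fin (2 * d))) : ℚ :=
  3 / 2 * (numSingletons d π : ℚ) + 2 * (numBlocks d π : ℚ)

/-- The unique element of `[k]` congruent to `j - o_j` modulo `k` (0-indexed form). -/
def prevVal (d : ℕ) (j : Fin (2 * d)) : Fin (2 * d) :=
  ⟨if (j : ℕ) % 2 = 0 then ((j : ℕ) + 2 * d - 1) % (2 * d) else ((j : ℕ) + 1) % (2 * d), by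
    have := j.isLt; split <;> exact Nat.mod_lt _ (by omega)⟩

/-!
Let `j` be the first entry of `π`, `a` its neighbour outside its pair, and `b` the partner of `a`.
Flip the prefix before `a`, then the prefix through `a`, then the prefix before `b`: the first flip
puts `j` next to `a`, the second brings `a` to the front, and the third puts `a` next to `b`, so
that `j, a, b` become contiguous. Each flip separates only two entries one of which is `a` or `b`.
As these two are free, and everything inside a block is not, all blocks survive: `≈_τ` is coarser
than `≈_π`. If `2m` elements cease to be free, then `2m ≥ 2` and at most `m - 1` new blocks appear,
since `a, b` join the block of `j`. So `ν` drops by at least `3m - 2(m - 1) = m + 2 ≥ 3`.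
-/

section Consecutive

variable {k : ℕ} {π τ : Equiv.Perm (Fin k)} {x y z : Fin k}

/-- Two values are cyclically adjacent if they differ by `1` modulo `k`. This is `PiAdjacency`
stated for values rather than for positions. -/
def CyclicAdj {k : ℕ} (x y : Fin k) : Prop :=
  (x : ℕ) + 1 = y ∨ (y : ℕ) + 1 = x ∨ ((x : ℕ) = 0 ∧ (y : ℕ) = k - 1) ∨
    ((x : ℕ) = k - 1 ∧ (y : ℕ) = 0)

/-- Two values are consecutive in `π` if they occupy neighbouring positions, in either order. -/
def Consecutive (π : Equiv.Perm (Fin k)) (x y : Fin k) : Prop :=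
  (π.symm x : ℕ) + 1 = π.symm y ∨ (π.symm y : ℕ) + 1 = π.symm x

lemma CyclicAdj.symm (h : CyclicAdj x y) : CyclicAdj y x := by
  unfold CyclicAdj at *
  omega

lemma Consecutive.symm (h : Consecutive π x y) : Consecutive π y x :=
  Or.symm h

lemma coe_symm_ne_of_ne (h : x ≠ y) : (π.symm x : ℕ) ≠ π.symm y :=
  fun heq => h (π.symm.injective (Fin.ext heq))

lemma piAdjacency_iff_cyclicAdj {p q : Fin k} :
    PiAdjacency k π p q ↔ CyclicAdj (π p) (π q) := by
  rw [PiAdjacency, CyclicAdj, Set.pair_eq_pair_iff]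
  omega

lemma posAdjacency_iff_cyclicAdj (h : (π.symm x : ℕ) + 1 = π.symm y) :
    PosAdjacency k π (π.symm x) ↔ CyclicAdj x y := by
  have hlt : (π.symm x : ℕ) + 1 < k := h ▸ (π.symm y).isLt
  have hy : (⟨(π.symm x : ℕ) + 1, hlt⟩ : Fin k) = π.symm y := Fin.ext h
  simp only [PosAdjacency, hlt, exists_true_left, piAdjacency_iff_cyclicAdj, hy, Fin.eta,
    Equiv.apply_symm_apply]

namespace Sim

lemma refl (π : Equiv.Perm (Fin k)) (x : Fin k) : Sim k π x x := by
  intro i hmin hmax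
  omega

lemma symm (h : Sim k π x y) : Sim k π y x := by
  intro i hmin hmax
  exact h i (by omega) (by omega)

lemma trans (hxy : Sim k π x y) (hyz : Sim k π y z) : Sim k π x z := by
  intro i hmin hmax
  by_cases hi : min (π.symm x : ℕ) (π.symm y) ≤ i ∧ i < max (π.symm x : ℕ) (π.symm y)
  · exact hxy i hi.1 hi.2
  · exact hyz i (by omega) (by omega)

lemma of_between {u v : Fin k} (h : Sim k π x y) (hxu : π.symm x ≤ π.symm u)
    (huv : π.symm u ≤ π.symm v) (hvy : π.symm v ≤ π.symm y) : Sim k π u v := by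
  intro i hmin hmax
  exact h i (by omega) (by omega)

lemma of_consecutive (h : Consecutive π x y) (hxy : CyclicAdj x y) : Sim k π x y := by
  wlog hpos : (π.symm x : ℕ) + 1 = π.symm y generalizing x y
  · exact (this h.symm hxy.symm (h.resolve_left hpos)).symm
  intro i hmin hmax
  obtain rfl : i = π.symm x := by omega
  exact (posAdjacency_iff_cyclicAdj hpos).2 hxy

lemma cyclicAdj (h : Sim k π x y) (hxy : (π.symm x : ℕ) + 1 = π.symm y) : CyclicAdj x y :=
  (posAdjacency_iff_cyclicAdj hxy).1 (h _ (by omega) (by omega))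

lemma of_forall_step (hxy : π.symm x ≤ π.symm y)
    (hstep : ∀ u v, (π.symm u : ℕ) + 1 = π.symm v → π.symm x ≤ π.symm u →
      π.symm v ≤ π.symm y → Sim k τ u v) : Sim k τ x y := by
  obtain ⟨n, hn⟩ := Nat.exists_eq_add_of_le (Fin.le_def.1 hxy)
  induction n generalizing y with
  | zero =>
    obtain rfl : y = x := π.symm.injective (Fin.ext hn)
    exact refl τ y
  | succ n ih =>
    obtain ⟨w, hw⟩ : ∃ w, (π.symm w : ℕ) = π.symm x + n :=
      ⟨π ⟨π.symm x + n, by omega⟩, by simp⟩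
    have hxw : Sim k τ x w := ih (by omega)
      (fun u v huv hxu hvw => hstep u v huv hxu (by omega)) hw
    exact hxw.trans (hstep w y (by omega) (by omega) le_rfl)

end Sim

end Consecutive

section Partner

variable {d : ℕ} {x y z : Fin (2 * d)}

lemma partner_involutive (d : ℕ) : Function.Involutive (partner d) := by
  intro x
  apply Fin.ext
  simp only [partner]
  split_ifs <;> omega

lemma partner_ne (x : Fin (2 * d)) : partner d x ≠ x := by
  simp only [ne_eq, Fin.ext_iff, partner]
  split_ifs <;> omega

lemma cyclicAdj_iff : CyclicAdj x y ↔ y = partner d x ∨ y = prevVal d x := by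
  simp only [CyclicAdj, Fin.ext_iff, partner, prevVal]
  split_ifs with hx
  · rcases Nat.eq_zero_or_pos (x : ℕ) with h0 | h0
    · rw [h0, Nat.mod_eq_of_lt (by omega)]
      omega
    · rw [show (x : ℕ) + 2 * d - 1 = ((x : ℕ) - 1) + 2 * d by omega, Nat.add_mod_right,
        Nat.mod_eq_of_lt (by omega)]
      omega
  · rcases Nat.lt_or_ge ((x : ℕ) + 1) (2 * d) with hlt | hge
    · rw [Nat.mod_eq_of_lt hlt]
      omega
    · rw [show (x : ℕ) + 1 = 2 * d by omega, Nat.mod_self]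
      omega

lemma cyclicAdj_partner (x : Fin (2 * d)) : CyclicAdj x (partner d x) :=
  cyclicAdj_iff.2 (Or.inl rfl)

lemma cyclicAdj_prevVal (x : Fin (2 * d)) : CyclicAdj x (prevVal d x) :=
  cyclicAdj_iff.2 (Or.inr rfl)

lemma CyclicAdj.eq_partner_or_eq_partner (hxy : CyclicAdj x y) (hxz : CyclicAdj x z)
    (hyz : y ≠ z) : y = partner d x ∨ z = partner d x := by
  rw [cyclicAdj_iff] at hxy hxz
  grind

end Partner

section Blocks

variable {d : ℕ} {π τ : Equiv.Perm (Fin (2 * d))} {x y z : Fin (2 * d)}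

lemma not_isFree_iff_sim_partner : ¬ IsFree d π x ↔ Sim (2 * d) π x (partner d x) := by
  constructor
  · intro h
    simp only [IsFree, not_forall] at h
    obtain ⟨y, hxy, hne⟩ := h
    exact (hxy.resolve_left (Ne.symm hne)).2.1
  · intro h hfree
    refine partner_ne x (hfree _ (Or.inr ⟨h, h, ?_⟩))
    rw [partner_involutive]
    exact h.symm

lemma isFree_partner_iff : IsFree d π (partner d x) ↔ IsFree d π x := by
  rw [← not_iff_not, not_isFree_iff_sim_partner, not_isFree_iff_sim_partner, partner_involutive]
  exact ⟨Sim.symm, Sim.symm⟩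

lemma approxSim_iff :
    ApproxSim d π x y ↔ x = y ∨ (Sim (2 * d) π x y ∧ ¬ IsFree d π x ∧ ¬ IsFree d π y) := by
  rw [not_isFree_iff_sim_partner, not_isFree_iff_sim_partner, ApproxSim]

lemma approxSim_equivalence (d : ℕ) (π : Equiv.Perm (Fin (2 * d))) :
    Equivalence (ApproxSim d π) where
  refl _ := Or.inl rfl
  symm := by
    rintro x y (rfl | ⟨hxy, hx, hy⟩)
    · exact Or.inl rfl
    · exact Or.inr ⟨hxy.symm, hy, hx⟩
  trans := by
    rintro x y z (rfl | ⟨hxy, hx, hy⟩) hyz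
    · exact hyz
    · rcases hyz with rfl | ⟨hyz, -, hz⟩
      · exact Or.inr ⟨hxy, hx, hy⟩
      · exact Or.inr ⟨hxy.trans hyz, hx, hz⟩

lemma approxSim_partner (h : ¬ IsFree d π x) : ApproxSim d π x (partner d x) :=
  approxSim_iff.2 (Or.inr ⟨not_isFree_iff_sim_partner.1 h, h, isFree_partner_iff.not.2 h⟩)

lemma not_isFree_of_between (hx : ¬ IsFree d π x) (hy : ¬ IsFree d π y)
    (hxy : Sim (2 * d) π x y) (hxz : π.symm x ≤ π.symm z) (hzy : π.symm z ≤ π.symm y) :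
    ¬ IsFree d π z := by
  rcases eq_or_ne x z with rfl | hxz'
  · exact hx
  rcases eq_or_ne y z with rfl | hyz'
  · exact hy
  have hltx := lt_of_le_of_ne hxz (π.symm.injective.ne hxz')
  have hlty := lt_of_le_of_ne hzy (π.symm.injective.ne hyz'.symm)
  obtain ⟨u, hu⟩ : ∃ u, (π.symm u : ℕ) + 1 = π.symm z :=
    ⟨π ⟨π.symm z - 1, by omega⟩, by simp only [Equiv.symm_apply_apply]; omega⟩
  obtain ⟨v, hv⟩ : ∃ v, (π.symm z : ℕ) + 1 = π.symm v :=
    ⟨π ⟨π.symm z + 1, by omega⟩, by simp⟩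
  have huz : Sim (2 * d) π u z := hxy.of_between (by omega) (by omega) hzy
  have hzv : Sim (2 * d) π z v := hxy.of_between hxz (by omega) (by omega)
  have huv : u ≠ v := by
    rintro rfl
    omega
  rw [not_isFree_iff_sim_partner]
  rcases (huz.cyclicAdj hu).symm.eq_partner_or_eq_partner (hzv.cyclicAdj hv) huv with rfl | rfl
  · exact huz.symm
  · exact hzv

lemma sim_of_forall_consecutive
    (hcons : ∀ u v, ¬ IsFree d π u → ¬ IsFree d π v → Consecutive π u v → Consecutive τ u v)
    (hx : ¬ IsFree d π x) (hy : ¬ IsFree d π y) (hxy : Sim (2 * d) π x y) :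
    Sim (2 * d) τ x y := by
  wlog hle : π.symm x ≤ π.symm y generalizing x y
  · exact (this hy hx hxy.symm (le_of_not_ge hle)).symm
  refine Sim.of_forall_step hle fun u v huv hxu hvy => ?_
  have hu : ¬ IsFree d π u := not_isFree_of_between hx hy hxy hxu (by omega)
  have hv : ¬ IsFree d π v := not_isFree_of_between hx hy hxy (by omega) hvy
  have hsim : Sim (2 * d) π u v := hxy.of_between hxu (by omega) hvy
  exact Sim.of_consecutive (hcons u v hu hv (Or.inl huv)) (hsim.cyclicAdj huv)

lemma approxSim_le_of_forall_consecutive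
    (hcons : ∀ u v, ¬ IsFree d π u → ¬ IsFree d π v → Consecutive π u v → Consecutive τ u v) :
    ApproxSim d π ≤ ApproxSim d τ := by
  have hfree : ∀ u, ¬ IsFree d π u → ¬ IsFree d τ u := fun u hu =>
    not_isFree_iff_sim_partner.2 <| sim_of_forall_consecutive hcons hu
      (isFree_partner_iff.not.2 hu) (not_isFree_iff_sim_partner.1 hu)
  intro x y h
  rw [approxSim_iff] at h ⊢
  rcases h with rfl | ⟨hxy, hx, hy⟩
  · exact Or.inl rfl
  · exact Or.inr ⟨sim_of_forall_consecutive hcons hx hy hxy, hfree x hx, hfree y hy⟩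

end Blocks

section Potential

variable {d : ℕ} {π τ : Equiv.Perm (Fin (2 * d))} {x y : Fin (2 * d)}

open Classical in
/-- The elements lying in blocks of `π`, i.e. those that are not free. -/
noncomputable def blockElements (d : ℕ) (π : Equiv.Perm (Fin (2 * d))) : Finset (Fin (2 * d)) :=
  {x | ¬ IsFree d π x}

lemma mem_blockElements : x ∈ blockElements d π ↔ ¬ IsFree d π x := by
  simp [blockElements]

lemma partner_mem_blockElements : partner d x ∈ blockElements d π ↔ x ∈ blockElements d π := by
  rw [mem_blockElements, mem_blockElements, isFree_partner_iff]

lemma blockElements_mono (h : ApproxSim d π ≤ ApproxSim d τ) :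
    blockElements d π ⊆ blockElements d τ := fun x hx => by
  rw [mem_blockElements] at hx ⊢
  exact fun hfree => hx fun y hxy => hfree y (h x y hxy)

lemma numSingletons_add_card_blockElements (d : ℕ) (π : Equiv.Perm (Fin (2 * d))) :
    numSingletons d π + (blockElements d π).card = 2 * d := by
  classical
  simpa [numSingletons, blockElements] using
    Finset.card_filter_add_card_filter_not (s := Finset.univ) (IsFree d π)

lemma mem_classOf : y ∈ classOf d π x ↔ ApproxSim d π x y := by
  simp [classOf]

lemma classOf_eq_classOf_iff : classOf d π x = classOf d π y ↔ ApproxSim d π x y := by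
  have heqv := approxSim_equivalence d π
  refine ⟨fun h => ?_, fun h => ?_⟩
  · rw [← mem_classOf, h, mem_classOf]
    exact heqv.refl y
  · ext z
    rw [mem_classOf, mem_classOf]
    exact ⟨heqv.trans (heqv.symm h), heqv.trans h⟩

lemma one_lt_card_classOf_iff : 1 < (classOf d π x).card ↔ x ∈ blockElements d π := by
  rw [Finset.one_lt_card_iff, mem_blockElements]
  constructor
  · rintro ⟨y, z, hy, hz, hyz⟩ hfree
    rw [mem_classOf] at hy hz
    exact hyz ((hfree y hy).trans (hfree z hz).symm)
  · exact fun h => ⟨x, partner d x, mem_classOf.2 ((approxSim_equivalence d π).refl x),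
      mem_classOf.2 (approxSim_partner h), (partner_ne x).symm⟩

lemma numBlocks_eq_card_image (d : ℕ) (π : Equiv.Perm (Fin (2 * d))) :
    numBlocks d π = ((blockElements d π).image (classOf d π)).card := by
  rw [numBlocks, Finset.filter_image]
  congr 2
  ext x
  simp [one_lt_card_classOf_iff]

lemma card_image_classOf_le_card_image_classOf (h : ApproxSim d π ≤ ApproxSim d τ)
    (s : Finset (Fin (2 * d))) : (s.image (classOf d τ)).card ≤ (s.image (classOf d π)).card := by
  refine Finset.card_le_card_of_forall_subsingleton
    (fun C C' => ∃ x, classOf d τ x = C ∧ classOf d π x = C') ?_ ?_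
  · simp only [Finset.forall_mem_image]
    exact fun x hx => ⟨classOf d π x, Finset.mem_image_of_mem _ hx, x, rfl, rfl⟩
  · rintro _ - _ ⟨-, x, rfl, rfl⟩ _ ⟨-, y, rfl, hyx⟩
    exact classOf_eq_classOf_iff.2 (h x y (classOf_eq_classOf_iff.1 hyx.symm))

lemma two_mul_card_image_classOf_le {s : Finset (Fin (2 * d))} (hs : s ⊆ blockElements d π)
    (hpartner : ∀ x ∈ s, partner d x ∈ s) : 2 * (s.image (classOf d π)).card ≤ s.card := by
  refine Finset.mul_card_image_le_card s 2 ?_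
  rw [Finset.forall_mem_image]
  intro x hx
  have hclass : classOf d π (partner d x) = classOf d π x :=
    (classOf_eq_classOf_iff.2 (approxSim_partner (mem_blockElements.1 (hs hx)))).symm
  refine Finset.one_lt_card.2 ⟨x, ?_, partner d x, ?_, (partner_ne x).symm⟩
  · exact Finset.mem_filter.2 ⟨hx, rfl⟩
  · exact Finset.mem_filter.2 ⟨hpartner x hx, hclass⟩

variable {a j : Fin (2 * d)}

lemma image_classOf_blockElements_subset (hj : j ∈ blockElements d π)
    (haj : ApproxSim d τ a j) (ha : a ∈ blockElements d τ) :
    (blockElements d τ).image (classOf d τ) ⊆ (blockElements d π).image (classOf d τ) ∪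
      ((blockElements d τ \ blockElements d π) \ {a, partner d a}).image (classOf d τ) := by
  have heqv := approxSim_equivalence d τ
  rw [Finset.image_subset_iff]
  intro x hx
  rw [Finset.mem_union]
  by_cases hxa : x = a ∨ x = partner d a
  · refine Or.inl (Finset.mem_image.2 ⟨j, hj, classOf_eq_classOf_iff.2 ?_⟩)
    rcases hxa with rfl | rfl
    · exact heqv.symm haj
    · exact heqv.trans (heqv.symm haj) (approxSim_partner (mem_blockElements.1 ha))
  · by_cases hxπ : x ∈ blockElements d π
    · exact Or.inl (Finset.mem_image_of_mem _ hxπ)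
    · exact Or.inr (Finset.mem_image_of_mem _ (by simp_all))

lemma two_mul_numBlocks_add_two_le (h : ApproxSim d π ≤ ApproxSim d τ)
    (haπ : a ∉ blockElements d π) (haτ : a ∈ blockElements d τ) (hj : j ∈ blockElements d π)
    (haj : ApproxSim d τ a j) :
    2 * numBlocks d τ + 2 ≤
      2 * numBlocks d π + (blockElements d τ \ blockElements d π).card := by
  have hsplit := (Finset.card_le_card
    (image_classOf_blockElements_subset hj haj haτ)).trans (Finset.card_union_le _ _)
  set new := blockElements d τ \ blockElements d π with hnew
  have hpair : {a, partner d a} ⊆ new := by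
    simp [hnew, Finset.insert_subset_iff, partner_mem_blockElements, haπ, haτ]
  have hcard := Finset.card_sdiff_add_card_eq_card hpair
  rw [Finset.card_pair (partner_ne a).symm] at hcard
  have hpartner : ∀ x ∈ new \ {a, partner d a}, partner d x ∈ new \ {a, partner d a} := by
    simp only [hnew, Finset.mem_sdiff, Finset.mem_insert, Finset.mem_singleton,
      partner_mem_blockElements, (partner_involutive d).injective.eq_iff,
      (partner_involutive d).eq_iff]
    tauto
  have hrest : 2 * ((new \ {a, partner d a}).image (classOf d τ)).card ≤
      (new \ {a, partner d a}).card :=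
    two_mul_card_image_classOf_le (Finset.sdiff_subset.trans Finset.sdiff_subset) hpartner
  have hold := card_image_classOf_le_card_image_classOf h (blockElements d π)
  rw [numBlocks_eq_card_image, numBlocks_eq_card_image]
  omega

lemma nu_add_three_le (h : ApproxSim d π ≤ ApproxSim d τ) (ha : IsFree d π a)
    (hj : ¬ IsFree d π j) (haj : ApproxSim d τ a j) : nu d τ + 3 ≤ nu d π := by
  have hne : j ≠ a := by
    rintro rfl
    exact hj ha
  have haπ : a ∉ blockElements d π := by rwa [mem_blockElements, not_not]
  have haτ : a ∈ blockElements d τ := mem_blockElements.2 fun hfree => hne (hfree j haj)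
  have hblocks := two_mul_numBlocks_add_two_le h haπ haτ (mem_blockElements.2 hj) haj
  have hnew : 2 ≤ (blockElements d τ \ blockElements d π).card :=
    Finset.one_lt_card.2 ⟨a, by simp [haπ, haτ], partner d a,
      by simp [partner_mem_blockElements, haπ, haτ], (partner_ne a).symm⟩
  have hsingletons : numSingletons d τ + (blockElements d τ \ blockElements d π).card =
      numSingletons d π := by
    have hsdiff := Finset.card_sdiff_add_card_eq_card (blockElements_mono h)
    have hπ := numSingletons_add_card_blockElements d π
    have hτ := numSingletons_add_card_blockElements d τ
    omega
  qify at hblocks hnew hsingletons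
  unfold nu
  linarith

end Potential

section Flips

variable {k : ℕ} {π : Equiv.Perm (Fin k)} {a b c x y : Fin k}

/-- The permutation of positions reversing the first `t` of them. -/
def prefixReversal (t : Fin (k + 1)) : Equiv.Perm (Fin k) :=
  Function.Involutive.toPerm
    (fun i => ⟨if (i : ℕ) < t then t - 1 - i else i, by split_ifs <;> omega⟩)
    (fun i => Fin.ext (by dsimp only; split_ifs <;> omega))

lemma coe_prefixReversal (t : Fin (k + 1)) (i : Fin k) :
    (prefixReversal t i : ℕ) = if (i : ℕ) < t then (t : ℕ) - 1 - i else i := rfl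

lemma coe_mul_prefixReversal_symm (t : Fin (k + 1)) (x : Fin k) :
    ((π * prefixReversal t).symm x : ℕ) =
      if (π.symm x : ℕ) < t then (t : ℕ) - 1 - π.symm x else π.symm x := rfl

lemma prefixRev_mul_prefixReversal (π : Equiv.Perm (Fin k)) (t : Fin (k + 1)) :
    PrefixRev k π (π * prefixReversal t) := by
  refine ⟨t, Nat.le_of_lt_succ t.isLt, fun i hi => ?_, fun i hi => ?_⟩
  · refine congrArg π (Fin.ext ?_)
    rw [coe_prefixReversal, if_neg (by omega)]
  · refine congrArg π (Fin.ext ?_)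
    rw [coe_prefixReversal, if_pos (by dsimp only; omega)]
    dsimp only
    omega

lemma edist_mul_prefixReversal_le_one (π : Equiv.Perm (Fin k)) (t : Fin (k + 1)) :
    (pancakeGraph k).edist π (π * prefixReversal t) ≤ 1 := by
  by_cases heq : π = π * prefixReversal t
  · rw [← heq, SimpleGraph.edist_self]
    exact zero_le
  · refine (SimpleGraph.edist_eq_one_iff_adj.2 ?_).le
    exact (SimpleGraph.fromRel_adj _ _ _).2 ⟨heq, Or.inl (prefixRev_mul_prefixReversal π t)⟩

lemma Consecutive.mul_prefixReversal (h : Consecutive π x y) {t : Fin (k + 1)}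
    (hcut : (π.symm x : ℕ) < t ↔ (π.symm y : ℕ) < t) :
    Consecutive (π * prefixReversal t) x y := by
  simp only [Consecutive, coe_mul_prefixReversal_symm] at *
  split_ifs <;> omega

/-- The result of flipping the entries of `π` that precede `c`. -/
def flipBefore (π : Equiv.Perm (Fin k)) (c : Fin k) : Equiv.Perm (Fin k) :=
  π * prefixReversal (π.symm c).castSucc

/-- The result of flipping the entries of `π` up to and including `c`. -/
def flipThrough (π : Equiv.Perm (Fin k)) (c : Fin k) : Equiv.Perm (Fin k) :=
  π * prefixReversal (π.symm c).succ

lemma Consecutive.flipBefore (h : Consecutive π x y) (hx : x ≠ c) (hy : y ≠ c) :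
    Consecutive (flipBefore π c) x y := by
  have hxc := coe_symm_ne_of_ne (π := π) hx
  have hyc := coe_symm_ne_of_ne (π := π) hy
  refine h.mul_prefixReversal ?_
  unfold Consecutive at h
  rw [Fin.val_castSucc]
  omega

lemma Consecutive.flipThrough (h : Consecutive π x y) (hx : x ≠ c) (hy : y ≠ c) :
    Consecutive (flipThrough π c) x y := by
  have hxc := coe_symm_ne_of_ne (π := π) hx
  have hyc := coe_symm_ne_of_ne (π := π) hy
  refine h.mul_prefixReversal ?_
  unfold Consecutive at h
  rw [Fin.val_succ]
  omega

lemma coe_flipBefore_symm_add_one (hx : (π.symm x : ℕ) = 0) (hxc : x ≠ c) :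
    ((flipBefore π c).symm x : ℕ) + 1 = (flipBefore π c).symm c := by
  have hpos := coe_symm_ne_of_ne (π := π) hxc
  simp only [flipBefore, coe_mul_prefixReversal_symm, Fin.val_castSucc]
  split_ifs <;> omega

lemma coe_flipThrough_symm_self (π : Equiv.Perm (Fin k)) (c : Fin k) :
    ((flipThrough π c).symm c : ℕ) = 0 := by
  simp only [flipThrough, coe_mul_prefixReversal_symm, Fin.val_succ]
  split_ifs <;> omega

/-- The result of the three flips that bring `a` between the first entry of `π` and `b`. -/
def gather (π : Equiv.Perm (Fin k)) (a b : Fin k) : Equiv.Perm (Fin k) :=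
  flipBefore (flipThrough (flipBefore π a) a) b

lemma dist_gather_le_three (π : Equiv.Perm (Fin k)) (a b : Fin k) :
    (pancakeGraph k).dist π (gather π a b) ≤ 3 := by
  refine ENat.toNat_le_of_le_natCast ?_
  calc (pancakeGraph k).edist π (gather π a b)
      ≤ (pancakeGraph k).edist π (flipBefore π a)
          + (pancakeGraph k).edist (flipBefore π a) (flipThrough (flipBefore π a) a)
          + (pancakeGraph k).edist (flipThrough (flipBefore π a) a) (gather π a b) :=
        SimpleGraph.edist_triangle.trans (add_le_add_left SimpleGraph.edist_triangle _)
    _ ≤ 1 + 1 + 1 := by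
        gcongr <;> exact edist_mul_prefixReversal_le_one _ _
    _ = (3 : ℕ) := by norm_num

lemma Consecutive.gather (h : Consecutive π x y) (hxa : x ≠ a) (hya : y ≠ a) (hxb : x ≠ b)
    (hyb : y ≠ b) : Consecutive (gather π a b) x y :=
  ((h.flipBefore hxa hya).flipThrough hxa hya).flipBefore hxb hyb

lemma consecutive_gather_first (hx : (π.symm x : ℕ) = 0) (hxa : x ≠ a) (hxb : x ≠ b)
    (hab : a ≠ b) : Consecutive (gather π a b) x a := by
  have hadj := coe_flipBefore_symm_add_one hx hxa
  have hcons : Consecutive (flipBefore π a) x a := Or.inl hadj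
  have hthrough : Consecutive (flipThrough (flipBefore π a) a) x a :=
    hcons.mul_prefixReversal (by rw [Fin.val_succ]; omega)
  exact hthrough.flipBefore hxb hab

lemma consecutive_gather (π : Equiv.Perm (Fin k)) (hab : a ≠ b) :
    Consecutive (gather π a b) a b :=
  Or.inl (coe_flipBefore_symm_add_one (coe_flipThrough_symm_self _ a) hab)

end Flips

section Gather

variable {d : ℕ} {π : Equiv.Perm (Fin (2 * d))} {a j : Fin (2 * d)}

lemma approxSim_le_approxSim_gather_partner (ha : IsFree d π a) :
    ApproxSim d π ≤ ApproxSim d (gather π a (partner d a)) := by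
  have hne : ∀ {x y}, ¬ IsFree d π x → IsFree d π y → x ≠ y := by
    rintro x _ hx hy rfl
    exact hx hy
  have hb : IsFree d π (partner d a) := isFree_partner_iff.2 ha
  exact approxSim_le_of_forall_consecutive fun x y hx hy hxy =>
    hxy.gather (hne hx ha) (hne hy ha) (hne hx hb) (hne hy hb)

lemma approxSim_gather_partner_first (hfirst : (π.symm j : ℕ) = 0) (hj : ¬ IsFree d π j)
    (ha : IsFree d π a) (hja : CyclicAdj j a) :
    ApproxSim d (gather π a (partner d a)) a j := by
  have hne_a : j ≠ a := by
    rintro rfl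
    exact hj ha
  have hne_b : j ≠ partner d a := by
    rintro rfl
    exact hj (isFree_partner_iff.2 ha)
  have hab : Sim (2 * d) (gather π a (partner d a)) a (partner d a) :=
    Sim.of_consecutive (consecutive_gather π (partner_ne a).symm) (cyclicAdj_partner a)
  have hsim : Sim (2 * d) (gather π a (partner d a)) j a :=
    Sim.of_consecutive (consecutive_gather_first hfirst hne_a hne_b (partner_ne a).symm) hja
  have hj_partner := approxSim_le_approxSim_gather_partner ha _ _ (approxSim_partner hj)
  exact Or.inr ⟨hsim.symm, hab, (hj_partner.resolve_left (partner_ne j).symm).1⟩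

end Gather

/-- Let `k = 2d`, `d ≥ 1`, and `π ∈ S_k` with `ν(π) > 2`. Let
`j = π(1)` and `j'` the unique element of `[k]` congruent to `j - o_j` mod `k`. If `j`
is not free but `j'` is free, then there is `τ` with `d_{P_k}(π, τ) ≤ 3` and
`ν(π) - ν(τ) ≥ 3`. -/
theorem statement_12 (d : ℕ) (hd : 1 ≤ d) (π : Equiv.Perm (Fin (2 * d)))
    (hν : 2 < nu d π)
    (hj : ¬ IsFree d π (π ⟨0, by omega⟩))
    (hj' : IsFree d π (prevVal d (π ⟨0, by omega⟩))) :
    ∃ τ : Equiv.Perm (Fin (2 * d)),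
      (pancakeGraph (2 * d)).dist π τ ≤ 3 ∧ 3 ≤ nu d π - nu d τ := by
  set j := π ⟨0, by omega⟩ with hj_def
  have hfirst : (π.symm j : ℕ) = 0 := by simp [hj_def]
  have hdrop := nu_add_three_le (approxSim_le_approxSim_gather_partner hj') hj' hj
    (approxSim_gather_partner_first hfirst hj hj' (cyclicAdj_prevVal j))
  exact ⟨gather π (prevVal d j) (partner d (prevVal d j)), dist_gather_le_three π _ _,
    by linarith⟩
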